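/- Let ζ = exp(2πi/5) ∈ ℂ. Define the set I = {v ∈ (ℤ/5ℤ)^4 : v ≠ 0 and v_1^2 + 2v_2^2 + 2v_3^2 + 2v_4^2 = 0 in ℤ/5ℤ} of nonzero isotropic vectors, and the function Σ : (ℤ/5ℤ)^4 → ℂ with Σ(0) = 4, Σ(v) = −1 for v ∈ I, and Σ(v) = 0 otherwise. Define the transformation h on functions f : (ℤ/5ℤ)^4 → ℂ by h(f)(u) = (1/25) ∑_{w ∈ (ℤ/5ℤ)^4} ζ^{(u_1 w_1 + 2 u_2 w_2 + 2 u_3 w_3 + 2 u_4 w_4).val} f(w), where (·).val ∈ {0,1,2,3,4} is the canonical representative of an element of ℤ/5ℤ. Then h(Σ) = −Σ. -/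

import Mathlib

open scoped ComplexConjugate

section

lemma fact_prime_five : Fact (Nat.Prime 5) := ⟨by norm_num⟩

attribute [local instance] fact_prime_five

/-- Completing the square in a quadratic exponential sum over `ℤ/5ℤ`, where `-1/4 = 1`. -/
lemma sum_addChar_quadratic (ψ : AddChar (ZMod 5) ℂ) {t : ZMod 5} (ht : t ≠ 0) (a b : ZMod 5) :
    ∑ x, ψ (t * (a * x ^ 2) + a * b * x) = ψ (t⁻¹ * (a * b ^ 2)) * ∑ x, ψ (t * a * x ^ 2) := by
  rw [Finset.mul_sum, ← Equiv.sum_comp (Equiv.addRight (2 * t⁻¹ * b))]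
  refine Finset.sum_congr rfl fun x _ => ?_
  rw [← AddChar.map_add_eq_mul]
  congr 1
  have h : t * t⁻¹ = 1 := mul_inv_cancel₀ ht
  have h5 : (5 : ZMod 5) = 0 := rfl
  simp only [Equiv.coe_addRight]
  linear_combination (4 * a * b * x + 4 * t⁻¹ * a * b ^ 2) * h +
    (a * b * x + t⁻¹ * a * b ^ 2) * h5

lemma sum_addChar_mul_left (ψ : AddChar (ZMod 5) ℂ) (hψ : ψ.IsPrimitive) (b : ZMod 5) :
    ∑ x, ψ (b * x) = if b = 0 then 5 else 0 := by
  have h := AddChar.sum_mulShift b hψ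
  simp only [mul_comm _ b, ZMod.card] at h
  rw [h]
  split_ifs <;> simp

/-- The product of the quadratic Gauss sums attached to `t` times the diagonal form
`⟨1, 2, 2, 2⟩` over `ℤ/5ℤ`. -/
lemma gauss_sum_prod (ψ : AddChar (ZMod 5) ℂ) (hψ : ψ.IsPrimitive) {t : ZMod 5} (ht : t ≠ 0) :
    (∑ x, ψ (t * 1 * x ^ 2)) * (∑ x, ψ (t * 2 * x ^ 2)) ^ 3 = -25 := by
  have h0 := sum_addChar_mul_left ψ hψ 1
  have hp : ∀ n : ℕ, ψ (n : ZMod 5) = ψ 1 ^ n := fun n => by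
    rw [← AddChar.map_nsmul_eq_pow, nsmul_one]
  have e2 : ψ 2 = ψ 1 ^ 2 := hp 2
  have e3 : ψ 3 = ψ 1 ^ 3 := hp 3
  have e4 : ψ 4 = ψ 1 ^ 4 := hp 4
  have e5 : ψ 1 ^ 5 = 1 := by rw [← hp 5, ← AddChar.map_zero_eq_one ψ]; rfl
  have huniv : ∀ f : ZMod 5 → ℂ, ∑ x, f x = f 0 + f 1 + f 2 + f 3 + f 4 :=
    fun f => Fin.sum_univ_five f
  rw [huniv] at h0
  simp only [one_mul, AddChar.map_zero_eq_one, e2, e3, e4, one_ne_zero, if_false] at h0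
  have key : (1 + 2 * ψ 1 + 2 * ψ 1 ^ 4) * (1 + 2 * ψ 1 ^ 2 + 2 * ψ 1 ^ 3) = -5 := by
    linear_combination 6 * h0 + (4 * ψ 1 + 4 * ψ 1 ^ 2) * e5
  have sq1 : (1 + 2 * ψ 1 + 2 * ψ 1 ^ 4) ^ 2 = 5 := by
    linear_combination 4 * h0 + (4 * ψ 1 ^ 3 + 8) * e5
  have sq2 : (1 + 2 * ψ 1 ^ 2 + 2 * ψ 1 ^ 3) ^ 2 = 5 := by
    linear_combination 4 * h0 + (4 * ψ 1 + 8) * e5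
  have s1 : ∑ x, ψ (1 * x ^ 2) = 1 + 2 * ψ 1 + 2 * ψ 1 ^ 4 := by
    rw [huniv, show (1 * 0 ^ 2 : ZMod 5) = 0 by decide, show (1 * 1 ^ 2 : ZMod 5) = 1 by decide,
      show (1 * 2 ^ 2 : ZMod 5) = 4 by decide, show (1 * 3 ^ 2 : ZMod 5) = 4 by decide,
      show (1 * 4 ^ 2 : ZMod 5) = 1 by decide, e4, AddChar.map_zero_eq_one]
    ring
  have s2 : ∑ x, ψ (2 * x ^ 2) = 1 + 2 * ψ 1 ^ 2 + 2 * ψ 1 ^ 3 := by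
    rw [huniv, show (2 * 0 ^ 2 : ZMod 5) = 0 by decide, show (2 * 1 ^ 2 : ZMod 5) = 2 by decide,
      show (2 * 2 ^ 2 : ZMod 5) = 3 by decide, show (2 * 3 ^ 2 : ZMod 5) = 3 by decide,
      show (2 * 4 ^ 2 : ZMod 5) = 2 by decide, e2, e3, AddChar.map_zero_eq_one]
    ring
  have hneg : ∀ c : ZMod 5, ∑ x, ψ (4 * c * x ^ 2) = ∑ x, ψ (c * x ^ 2) := fun c => by
    refine Fintype.sum_equiv (Equiv.mulLeft₀ (2 : ZMod 5) (by decide)) _ _ fun x => ?_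
    change ψ (4 * c * x ^ 2) = ψ (c * (2 * x) ^ 2)
    congr 1
    ring
  have s4 := (hneg 1).trans s1
  have s3 := (hneg 2).trans s2
  have ht' : t = 1 ∨ t = 2 ∨ t = 3 ∨ t = 4 := by revert t; decide
  have r1 : (1 + 2 * ψ 1 + 2 * ψ 1 ^ 4) * (1 + 2 * ψ 1 ^ 2 + 2 * ψ 1 ^ 3) ^ 3 = -25 := by
    linear_combination (1 + 2 * ψ 1 ^ 2 + 2 * ψ 1 ^ 3) ^ 2 * key - 5 * sq2
  have r2 : (1 + 2 * ψ 1 ^ 2 + 2 * ψ 1 ^ 3) * (1 + 2 * ψ 1 + 2 * ψ 1 ^ 4) ^ 3 = -25 := by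
    linear_combination (1 + 2 * ψ 1 + 2 * ψ 1 ^ 4) ^ 2 * key - 5 * sq1
  rcases ht' with rfl | rfl | rfl | rfl
  · rw [show (1 * 1 : ZMod 5) = 1 by decide, show (1 * 2 : ZMod 5) = 2 by decide, s1, s2, r1]
  · rw [show (2 * 1 : ZMod 5) = 2 by decide, show (2 * 2 : ZMod 5) = 4 * 1 by decide, s2, s4, r2]
  · rw [show (3 * 1 : ZMod 5) = 4 * 2 by decide, show (3 * 2 : ZMod 5) = 1 by decide, s3, s1, r2]
  · rw [s4, s3, r1]

/-- A sum over `(ℤ/5ℤ)⁴` of a product of functions of the single coordinates factors. -/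
lemma sum_fin_four_mul (f₀ f₁ f₂ f₃ : ZMod 5 → ℂ) :
    ∑ w : Fin 4 → ZMod 5, f₀ (w 0) * f₁ (w 1) * f₂ (w 2) * f₃ (w 3) =
      (∑ x, f₀ x) * (∑ x, f₁ x) * (∑ x, f₂ x) * ∑ x, f₃ x := by
  have h := Finset.prod_univ_sum (fun _ : Fin 4 => (Finset.univ : Finset (ZMod 5)))
    ![f₀, f₁, f₂, f₃]
  rw [Fintype.piFinset_univ] at h
  simpa [Fin.prod_univ_four] using h.symm

/-- The exponential sum of `t * Q(w) + B(u, w)` over all `w`, uniformly in `t`. -/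
lemma sum_addChar_form (ψ : AddChar (ZMod 5) ℂ) (hψ : ψ.IsPrimitive) (u : Fin 4 → ZMod 5)
    (t : ZMod 5) :
    ∑ w : Fin 4 → ZMod 5, ψ (t * (w 0 ^ 2 + 2 * w 1 ^ 2 + 2 * w 2 ^ 2 + 2 * w 3 ^ 2) +
        (u 0 * w 0 + 2 * u 1 * w 1 + 2 * u 2 * w 2 + 2 * u 3 * w 3)) =
      -25 * ψ (t⁻¹ * (u 0 ^ 2 + 2 * u 1 ^ 2 + 2 * u 2 ^ 2 + 2 * u 3 ^ 2)) +
        if t = 0 then 25 + (if u = 0 then 625 else 0) else 0 := by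
  have hsplit : ∀ w : Fin 4 → ZMod 5,
      ψ (t * (w 0 ^ 2 + 2 * w 1 ^ 2 + 2 * w 2 ^ 2 + 2 * w 3 ^ 2) +
        (u 0 * w 0 + 2 * u 1 * w 1 + 2 * u 2 * w 2 + 2 * u 3 * w 3)) =
      ψ (t * (1 * w 0 ^ 2) + 1 * u 0 * w 0) * ψ (t * (2 * w 1 ^ 2) + 2 * u 1 * w 1) *
        ψ (t * (2 * w 2 ^ 2) + 2 * u 2 * w 2) * ψ (t * (2 * w 3 ^ 2) + 2 * u 3 * w 3) := by
    intro w
    simp only [← AddChar.map_add_eq_mul]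
    congr 1
    ring
  simp only [hsplit]
  rw [sum_fin_four_mul (fun x => ψ (t * (1 * x ^ 2) + 1 * u 0 * x))
    (fun x => ψ (t * (2 * x ^ 2) + 2 * u 1 * x)) (fun x => ψ (t * (2 * x ^ 2) + 2 * u 2 * x))
    (fun x => ψ (t * (2 * x ^ 2) + 2 * u 3 * x))]
  by_cases ht : t = 0
  · have h2 : (2 : ZMod 5) ≠ 0 := by decide
    have hu : u = 0 ↔ u 0 = 0 ∧ u 1 = 0 ∧ u 2 = 0 ∧ u 3 = 0 := by
      simp [funext_iff, Fin.forall_fin_succ]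
    simp only [ht, zero_mul, zero_add, sum_addChar_mul_left ψ hψ, one_mul, mul_eq_zero, h2,
      false_or, inv_zero, AddChar.map_zero_eq_one, if_true, hu]
    by_cases h0 : u 0 = 0 <;> by_cases h1 : u 1 = 0 <;> by_cases h3 : u 2 = 0 <;>
      by_cases h4 : u 3 = 0 <;> norm_num [h0, h1, h3, h4]
  · simp only [sum_addChar_quadratic ψ ht, if_neg ht, add_zero]
    have hQ : ψ (t⁻¹ * (u 0 ^ 2 + 2 * u 1 ^ 2 + 2 * u 2 ^ 2 + 2 * u 3 ^ 2)) =
        ψ (t⁻¹ * (1 * u 0 ^ 2)) * ψ (t⁻¹ * (2 * u 1 ^ 2)) * ψ (t⁻¹ * (2 * u 2 ^ 2)) *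
          ψ (t⁻¹ * (2 * u 3 ^ 2)) := by
      simp only [← AddChar.map_add_eq_mul]
      congr 1
      ring
    rw [hQ, ← gauss_sum_prod ψ hψ ht]
    ring

end

/-- Let `ζ = exp(2πi/5)`, let `Σ : (ℤ/5ℤ)⁴ → ℂ` take the value `4` at `0`, `−1` on
the nonzero isotropic vectors of the quadratic form `v₁² + 2v₂² + 2v₃² + 2v₄²`, and
`0` elsewhere.  Let `h` be the MacWilliams transformation
`h(f)(u) = (1/25) ∑_w ζ^{(u₁w₁ + 2u₂w₂ + 2u₃w₃ + 2u₄w₄).val} f(w)`.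
Then `h(Σ) = −Σ`. -/
theorem macwilliams_anti_invariant :
    let ζ : ℂ := Complex.exp (2 * Real.pi * Complex.I / 5)
    let Sig : (Fin 4 → ZMod 5) → ℂ := fun w =>
      if w = 0 then 4
      else if w 0 ^ 2 + 2 * w 1 ^ 2 + 2 * w 2 ^ 2 + 2 * w 3 ^ 2 = 0 then -1
      else 0
    ∀ u : Fin 4 → ZMod 5,
      (1 / 25 : ℂ) * ∑ w : Fin 4 → ZMod 5,
          ζ ^ ((u 0 * w 0 + 2 * u 1 * w 1 + 2 * u 2 * w 2 + 2 * u 3 * w 3).val) * Sig w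
        = - Sig u := by
  intro ζ Sig u
  have := fact_prime_five
  have hζ : IsPrimitiveRoot ζ 5 := Complex.isPrimitiveRoot_exp 5 (by norm_num)
  let ψ : AddChar (ZMod 5) ℂ := AddChar.zmodChar 5 hζ.pow_eq_one
  have hψ : ψ.IsPrimitive := AddChar.zmodChar_primitive_of_primitive_root 5 hζ
  have hpow : ∀ a : ZMod 5, ζ ^ a.val = ψ a := fun a => (AddChar.zmodChar_apply _ a).symm
  let Q : (Fin 4 → ZMod 5) → ZMod 5 := fun w =>
    w 0 ^ 2 + 2 * w 1 ^ 2 + 2 * w 2 ^ 2 + 2 * w 3 ^ 2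
  let B : (Fin 4 → ZMod 5) → ZMod 5 := fun w =>
    u 0 * w 0 + 2 * u 1 * w 1 + 2 * u 2 * w 2 + 2 * u 3 * w 3
  have hSig : ∀ w, Sig w = (if w = 0 then 5 else 0) - (1 / 5) * ∑ t, ψ (t * Q w) := by
    intro w
    simp only [mul_comm _ (Q w), sum_addChar_mul_left ψ hψ]
    by_cases hw : w = 0
    · subst hw
      norm_num [Sig, Q]
    · by_cases hq : Q w = 0
      · have hq' := hq
        simp only [Q] at hq'
        simp [Sig, hw, hq, hq']
      · have hq' := hq
        simp only [Q] at hq'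
        simp [Sig, hw, hq, hq']
  have hsum : ∑ w, ψ (B w) * Sig w = 5 - (1 / 5) * ∑ t, ∑ w, ψ (t * Q w + B w) := by
    simp only [hSig, mul_sub, Finset.sum_sub_distrib, mul_ite, mul_zero]
    rw [Finset.sum_ite_eq' Finset.univ (0 : Fin 4 → ZMod 5), Finset.sum_comm, Finset.mul_sum]
    congr 1
    · simp [B]
    · refine Finset.sum_congr rfl fun w _ => ?_
      simp only [AddChar.map_add_eq_mul, ← Finset.sum_mul]
      ring
  have hinv : ∑ t : ZMod 5, ψ (t⁻¹ * Q u) = ∑ t, ψ (t * Q u) :=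
    Fintype.sum_equiv (Equiv.inv (ZMod 5)) _ _ fun t => rfl
  have hform : ∑ t, ∑ w, ψ (t * Q w + B w) =
      -25 * ∑ t, ψ (t * Q u) + (25 + if u = 0 then 625 else 0) := by
    rw [← hinv, Finset.sum_congr rfl fun t _ => sum_addChar_form ψ hψ u t,
      Finset.sum_add_distrib, ← Finset.mul_sum, Finset.sum_ite_eq' Finset.univ (0 : ZMod 5)]
    simp [Q]
  simp only [hpow]
  change (1 / 25 : ℂ) * ∑ w, ψ (B w) * Sig w = -Sig u
  rw [hsum, hform, hSig u]
  split_ifs <;> ring
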